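/- The derivation module D(𝒜₉₃) of the central hyperplane arrangement 𝒜₉₃ in ℂ⁴ with defining equation Q₉₃ = x·y·z·w·(x+y)·(x−y+z)·(y−z−w)·(x+z−w) is not a free module over S = ℂ[x,y,z,w]. -/

import Mathlib

open MvPolynomial

noncomputable section

/-- The polynomial ring `S = ℂ[x,y,z,w]`, with `x = X 0`, `y = X 1`, `z = X 2`, `w = X 3`. -/
abbrev S4 : Type := MvPolynomial (Fin 4) ℂ

/-- The linear form `c₀·x + c₁·y + c₂·z + c₃·w` with coefficient vector `c`. -/
noncomputable def linForm (c : Fin 4 → ℂ) : S4 := ∑ i, C (c i) * X i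

/-- A polynomial derivation `θ = a₁∂ₓ + a₂∂_y + a₃∂_z + a₄∂_w` of `S` is identified with
its coefficient tuple `a : Fin 4 → S`; the linear map `derMap f` sends `a` to `θ(f)`. -/
noncomputable def derMap (f : S4) : (Fin 4 → S4) →ₗ[S4] S4 where
  toFun a := ∑ i, a i * pderiv i f
  map_add' a b := by simp [add_mul, Finset.sum_add_distrib]
  map_smul' c a := by simp [Finset.mul_sum, mul_assoc]

/-- The derivation module `D(𝒜)` of the central arrangement whose hyperplanes are the kernels
of the linear forms `linForm (α H)`: all derivations `θ` with `θ(α_H) ∈ S·α_H` for every `H`. -/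
noncomputable def derivModule {ι : Type} (α : ι → (Fin 4 → ℂ)) :
    Submodule S4 (Fin 4 → S4) :=
  ⨅ H, Submodule.comap (derMap (linForm (α H))) (Ideal.span {linForm (α H)})

end

/-- The coefficient vectors of the eight linear factors of Q = xyzw(x+y)(x-y+z)(y-z-w)(x+z-w), defining the rigid Cynk–Szemberg octic arrangement 𝒜₉₃ ⊂ ℙ³. -/
noncomputable def A93 : Fin 8 → (Fin 4 → ℂ) :=
  ![![1, 0, 0, 0],
    ![0, 1, 0, 0],
    ![0, 0, 1, 0],
    ![0, 0, 0, 1],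
    ![1, 1, 0, 0],
    ![1, -1, 1, 0],
    ![0, 1, -1, -1],
    ![1, 0, 1, -1]]

/-! Near a point of `ℙ³` lying on exactly four planes `a`, `b`, `c`, `d`, no three of them through a
common line, scale so that `d = a + b + c`. The quotients `g_a = θ(a) / a`, etc. of a logarithmic
derivation satisfy `a (g_a - g_d) + b (g_b - g_d) + c (g_c - g_d) = 0`, so locally `D(𝒜)` is a free
module of rank two plus the module of syzygies of the regular sequence `a, b, c`, whose fibre has
dimension three (the Koszul syzygies). Hence the fibre of `D(𝒜)` at the point has dimension at
least five, whereas a free submodule of `S⁴` has fibres of dimension at most four. For `𝒜₉₃` the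
planes `z`, `x - y + z`, `y - z - w`, `x + z - w` meet in this way at `(1 : 1 : 0 : 1)`. -/

theorem finrank_le_finrank_of_surjective_semilinear {R K M V : Type*} [CommRing R] [Field K]
    {σ : R →+* K} [AddCommGroup M] [Module R M] [Module.Free R M] [Module.Finite R M]
    [AddCommGroup V] [Module K V] (φ : M →ₛₗ[σ] V) (hφ : Function.Surjective φ) :
    Module.finrank K V ≤ Module.finrank R M := by
  have : Nontrivial R := σ.domain_nontrivial
  let b := Module.Free.chooseBasis R M
  have hspan : Submodule.span K (Set.range (φ ∘ b)) = ⊤ := by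
    refine Submodule.eq_top_iff'.2 fun v ↦ ?_
    obtain ⟨x, rfl⟩ := hφ v
    rw [← b.sum_repr x, map_sum]
    refine Submodule.sum_mem _ fun i _ ↦ ?_
    rw [map_smulₛₗ]
    exact Submodule.smul_mem _ _ (Submodule.subset_span ⟨i, rfl⟩)
  calc Module.finrank K V = (Set.range (φ ∘ b)).finrank K := by
        rw [Set.finrank, hspan, finrank_top]
    _ ≤ Fintype.card (Module.Free.ChooseBasisIndex R M) := finrank_range_le_card _
    _ = Module.finrank R M := (Module.finrank_eq_card_chooseBasisIndex R M).symm

theorem eval_linForm (c p : Fin 4 → ℂ) : eval p (linForm c) = c ⬝ᵥ p := by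
  simp [linForm, dotProduct]

theorem linForm_ne_zero {c : Fin 4 → ℂ} (hc : c ≠ 0) : linForm c ≠ 0 := by
  intro h
  refine hc (dotProduct_eq_zero c fun p ↦ ?_)
  rw [← eval_linForm, h, map_zero]

theorem derMap_linForm (c : Fin 4 → ℂ) (θ : Fin 4 → S4) :
    derMap (linForm c) θ = ∑ i, C (c i) * θ i := by
  simp [derMap, linForm, pderiv_X, Pi.single_apply, mul_comm]

theorem derMap_linForm_X (c : Fin 4 → ℂ) : derMap (linForm c) X = linForm c :=
  derMap_linForm c X

theorem derMap_linForm_C (c v : Fin 4 → ℂ) :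
    derMap (linForm c) (fun i ↦ C (v i)) = C (c ⬝ᵥ v) := by
  simp [derMap_linForm, dotProduct]

theorem derMap_linForm_sum_smul {κ : Type*} [Fintype κ] (a : κ → ℂ) (v : κ → Fin 4 → ℂ)
    (θ : Fin 4 → S4) :
    derMap (linForm (∑ k, a k • v k)) θ = ∑ k, C (a k) * derMap (linForm (v k)) θ := by
  simp only [derMap_linForm, Finset.sum_apply, Pi.smul_apply, smul_eq_mul, map_sum, map_mul,
    Finset.sum_mul, Finset.mul_sum, mul_assoc]
  exact Finset.sum_comm

theorem linForm_sum_smul {κ : Type*} [Fintype κ] (a : κ → ℂ) (v : κ → Fin 4 → ℂ) :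
    linForm (∑ k, a k • v k) = ∑ k, C (a k) * linForm (v k) := by
  simpa only [derMap_linForm_X] using derMap_linForm_sum_smul a v X

/-- The directional derivative along the constant vector field `v`. -/
noncomputable def dirDeriv (v : Fin 4 → ℂ) : Derivation ℂ S4 S4 :=
  mkDerivation ℂ fun i ↦ C (v i)

theorem dirDeriv_linForm (v c : Fin 4 → ℂ) : dirDeriv v (linForm c) = C (c ⬝ᵥ v) := by
  simp [dirDeriv, linForm, dotProduct, mkDerivation_X]

theorem eval_dirDeriv_mul_of_eval_eq_zero {p : Fin 4 → ℂ} (v : Fin 4 → ℂ) (f : S4) {g : S4}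
    (hg : eval p g = 0) : eval p (dirDeriv v (f * g)) = eval p f * eval p (dirDeriv v g) := by
  simp [Derivation.leibniz, hg]

theorem eval_eq_zero_of_sum_linForm_mul_eq_zero {κ : Type*} [Fintype κ] [DecidableEq κ]
    {v u : κ → Fin 4 → ℂ} {p : Fin 4 → ℂ} (hu : ∀ i j, v i ⬝ᵥ u j = if i = j then 1 else 0)
    (hp : ∀ i, v i ⬝ᵥ p = 0) {s : κ → S4} (hs : ∑ i, s i * linForm (v i) = 0) (j : κ) :
    eval p (s j) = 0 := by
  have hv (i : κ) : eval p (linForm (v i)) = 0 := by rw [eval_linForm, hp]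
  -- The derivative along `u j` at `p` isolates the value of `s j`.
  have h := congrArg (fun f ↦ eval p (dirDeriv (u j) f)) hs
  simpa [dirDeriv_linForm, Derivation.leibniz, hu, hv, apply_ite (eval p)] using h

section DerivModule

variable {ι : Type} {α : ι → Fin 4 → ℂ}

theorem mem_derivModule {θ : Fin 4 → S4} :
    θ ∈ derivModule α ↔ ∀ H, linForm (α H) ∣ derMap (linForm (α H)) θ := by
  simp only [derivModule, Submodule.mem_iInf, Submodule.mem_comap, Ideal.mem_span_singleton]

theorem euler_mem_derivModule : X ∈ derivModule α :=
  mem_derivModule.2 fun H ↦ (derMap_linForm_X (α H)).symm.dvd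

theorem derMap_linForm_mem_span (H : ι) (θ : derivModule α) :
    derMap (linForm (α H)) θ ∈ Submodule.span S4 {linForm (α H)} :=
  Ideal.mem_span_singleton.2 (mem_derivModule.1 θ.2 H)

/-- The map `θ ↦ θ(α_H) / α_H` on the derivation module. -/
noncomputable def derQuot (H : ι) (hH : α H ≠ 0) : derivModule α →ₗ[S4] S4 :=
  (LinearEquiv.toSpanNonzeroSingleton S4 S4 _ (linForm_ne_zero hH)).symm.toLinearMap ∘ₗ
    (derMap (linForm (α H)) ∘ₗ (derivModule α).subtype).codRestrict _ (derMap_linForm_mem_span H)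

theorem derQuot_mul_linForm (H : ι) (hH : α H ≠ 0) (θ : derivModule α) :
    derQuot H hH θ * linForm (α H) = derMap (linForm (α H)) θ := by
  have h := congrArg Subtype.val ((LinearEquiv.toSpanNonzeroSingleton S4 S4 _
    (linForm_ne_zero hH)).apply_symm_apply ⟨_, derMap_linForm_mem_span H θ⟩)
  rw [LinearEquiv.toSpanNonzeroSingleton_apply] at h
  exact h

theorem derQuot_eq_of_mul_linForm_eq {H : ι} (hH : α H ≠ 0) {θ : derivModule α} {g : S4}
    (h : g * linForm (α H) = derMap (linForm (α H)) θ) : derQuot H hH θ = g :=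
  mul_right_cancel₀ (linForm_ne_zero hH) ((derQuot_mul_linForm H hH θ).trans h.symm)

/-- The product of the defining forms of the hyperplanes that do not contain `p`. -/
noncomputable def awayProd [Fintype ι] (α : ι → Fin 4 → ℂ) (p : Fin 4 → ℂ) : S4 :=
  ∏ H with α H ⬝ᵥ p ≠ 0, linForm (α H)

theorem eval_awayProd_ne_zero [Fintype ι] (p : Fin 4 → ℂ) : eval p (awayProd α p) ≠ 0 := by
  rw [awayProd, map_prod, Finset.prod_ne_zero_iff]
  intro H hH
  rw [eval_linForm]
  exact (Finset.mem_filter.1 hH).2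

theorem awayProd_smul_mem_derivModule [Fintype ι] {p : Fin 4 → ℂ} {θ : Fin 4 → S4}
    (hθ : ∀ H, α H ⬝ᵥ p = 0 → linForm (α H) ∣ derMap (linForm (α H)) θ) :
    awayProd α p • θ ∈ derivModule α := by
  refine mem_derivModule.2 fun H ↦ ?_
  rw [map_smul, smul_eq_mul]
  by_cases hH : α H ⬝ᵥ p = 0
  · exact (hθ H hH).mul_left _
  · exact (Finset.dvd_prod_of_mem (fun K ↦ linForm (α K))
      (Finset.mem_filter.2 ⟨Finset.mem_univ H, hH⟩)).mul_right _

end DerivModule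

/-- A point of `ℙ³` lying on exactly four planes of the arrangement `α`, no three of which share a
line. Three of the planes are `plane i`, the fourth one is `last`, whose form is a combination of
the other three with nonzero coefficients `coeff`; the vectors `dual` witness the linear
independence of these three. -/
structure GenericQuadruplePoint {ι : Type} (α : ι → Fin 4 → ℂ) where
  point : Fin 4 → ℂ
  plane : Fin 3 → ι
  last : ι
  coeff : Fin 3 → ℂ
  dual : Fin 3 → Fin 4 → ℂ
  point_ne_zero : point ≠ 0
  coeff_ne_zero : ∀ i, coeff i ≠ 0
  plane_dual : ∀ i j, α (plane i) ⬝ᵥ dual j = if i = j then 1 else 0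
  last_eq : α last = ∑ i, coeff i • α (plane i)
  plane_point : ∀ i, α (plane i) ⬝ᵥ point = 0
  eq_of_point : ∀ H, α H ⬝ᵥ point = 0 → H = last ∨ ∃ i, H = plane i

namespace GenericQuadruplePoint

variable {ι : Type} {α : ι → Fin 4 → ℂ} (P : GenericQuadruplePoint α)

theorem last_dual (j : Fin 3) : α P.last ⬝ᵥ P.dual j = P.coeff j := by
  simp [P.last_eq, sum_dotProduct, P.plane_dual]

theorem form_plane_ne_zero (i : Fin 3) : α (P.plane i) ≠ 0 := by
  intro h
  simpa [h] using P.plane_dual i i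

theorem form_last_ne_zero : α P.last ≠ 0 := by
  intro h
  exact P.coeff_ne_zero 0 (by simpa [h] using (P.last_dual 0).symm)

/-- The quotient `θ(d) / d` for the last form `d`. -/
noncomputable def lastQuot : derivModule α →ₗ[S4] S4 := derQuot P.last P.form_last_ne_zero

/-- The difference of `θ(a) / a` and `θ(d) / d`, where `a` is the `i`-th form and `d` the last. -/
noncomputable def syzygy (i : Fin 3) : derivModule α →ₗ[S4] S4 :=
  derQuot (P.plane i) (P.form_plane_ne_zero i) - P.lastQuot

theorem sum_syzygy_mul_linForm (θ : derivModule α) :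
    ∑ i, C (P.coeff i) * P.syzygy i θ * linForm (α (P.plane i)) = 0 := by
  have hsplit (i : Fin 3) : C (P.coeff i) * P.syzygy i θ * linForm (α (P.plane i)) =
      C (P.coeff i) * derMap (linForm (α (P.plane i))) θ -
        P.lastQuot θ * (C (P.coeff i) * linForm (α (P.plane i))) := by
    rw [← derQuot_mul_linForm _ (P.form_plane_ne_zero i), syzygy, LinearMap.sub_apply]
    ring
  rw [Finset.sum_congr rfl fun i _ ↦ hsplit i, Finset.sum_sub_distrib, ← Finset.mul_sum,
    ← derMap_linForm_sum_smul, ← linForm_sum_smul, ← P.last_eq, lastQuot, derQuot_mul_linForm,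
    sub_self]

theorem eval_syzygy (i : Fin 3) (θ : derivModule α) : eval P.point (P.syzygy i θ) = 0 := by
  have h := eval_eq_zero_of_sum_linForm_mul_eq_zero P.plane_dual P.plane_point
    (P.sum_syzygy_mul_linForm θ) i
  simpa [P.coeff_ne_zero i] using h

/-- Five functionals on `D(𝒜)` factoring through its fibre at the point. The last three are
first-order terms of the syzygies, which are well defined on the fibre by `eval_syzygy`; the indices
`k + 1` and `k + 2` are taken modulo three. -/
noncomputable def fibreMap (m : Fin 4) :
    derivModule α →ₛₗ[eval P.point] ℂ × ℂ × (Fin 3 → ℂ) where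
  toFun θ := (eval P.point (P.lastQuot θ), eval P.point (θ.1 m),
    fun k ↦ eval P.point (dirDeriv (P.dual (k + 2)) (P.syzygy (k + 1) θ)))
  map_add' θ η := by
    simp only [map_add, Submodule.coe_add, Pi.add_apply]
    rfl
  map_smul' f θ := by
    simp only [map_smul, smul_eq_mul, map_mul, Submodule.coe_smul, Pi.smul_apply,
      eval_dirDeriv_mul_of_eval_eq_zero _ _ (P.eval_syzygy _ θ)]
    rfl

theorem fibreMap_euler (m : Fin 4) :
    P.fibreMap m ⟨X, euler_mem_derivModule⟩ = (1, P.point m, 0) := by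
  have hquot (H : ι) (hH : α H ≠ 0) : derQuot H hH ⟨X, euler_mem_derivModule⟩ = 1 :=
    derQuot_eq_of_mul_linForm_eq hH ((one_mul _).trans (derMap_linForm_X _).symm)
  have hsyz (i : Fin 3) : P.syzygy i ⟨X, euler_mem_derivModule⟩ = 0 := by
    rw [syzygy, lastQuot, LinearMap.sub_apply, hquot, hquot, sub_self]
  ext <;> simp [fibreMap, lastQuot, hquot, hsyz]

theorem last_point : α P.last ⬝ᵥ P.point = 0 := by
  simp [P.last_eq, sum_dotProduct, P.plane_point]

/-- The Koszul derivation `a b (c_b ∂_a - c_a ∂_b)`, where `a` and `b` are the `i`-th and `j`-th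
forms, with coefficients `c_a` and `c_b` in the last form. -/
noncomputable def koszulVec (i j : Fin 3) : Fin 4 → S4 :=
  (linForm (α (P.plane i)) * linForm (α (P.plane j))) •
    fun n ↦ C ((P.coeff j • P.dual i - P.coeff i • P.dual j) n)

theorem derMap_last_koszulVec (i j : Fin 3) :
    derMap (linForm (α P.last)) (P.koszulVec i j) = 0 := by
  rw [koszulVec, map_smul, derMap_linForm_C, dotProduct_sub, dotProduct_smul, dotProduct_smul,
    P.last_dual, P.last_dual, smul_eq_mul (P.coeff j), smul_eq_mul (P.coeff i),
    mul_comm (P.coeff j), sub_self, map_zero, smul_zero]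

theorem derMap_plane_koszulVec (i j l : Fin 3) :
    derMap (linForm (α (P.plane l))) (P.koszulVec i j) =
      ((if l = i then C (P.coeff j) * linForm (α (P.plane j)) else 0) -
        if l = j then C (P.coeff i) * linForm (α (P.plane i)) else 0) *
          linForm (α (P.plane l)) := by
  rw [koszulVec, map_smul, derMap_linForm_C, dotProduct_sub, dotProduct_smul, dotProduct_smul,
    P.plane_dual, P.plane_dual]
  split_ifs <;> subst_vars <;>
    simp only [smul_eq_mul, mul_one, mul_zero, sub_self, sub_zero, zero_sub, C_0, C_neg] <;> ring

section AwayProd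

variable [Fintype ι]

/-- The constant derivation along the point, multiplied into `D(𝒜)`. -/
noncomputable def constDer : derivModule α :=
  ⟨awayProd α P.point • fun i ↦ C (P.point i),
    awayProd_smul_mem_derivModule fun H hH ↦ by simp [derMap_linForm_C, hH]⟩

theorem fibreMap_constDer (m : Fin 4) :
    P.fibreMap m P.constDer = (0, eval P.point (awayProd α P.point) * P.point m, 0) := by
  have hquot {H : ι} (hH : α H ≠ 0) (hp : α H ⬝ᵥ P.point = 0) : derQuot H hH P.constDer = 0 :=
    derQuot_eq_of_mul_linForm_eq hH (by simp [constDer, derMap_linForm_C, hp])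
  have hlast : P.lastQuot P.constDer = 0 := hquot _ P.last_point
  have hsyz (i : Fin 3) : P.syzygy i P.constDer = 0 := by
    rw [syzygy, LinearMap.sub_apply, hlast, hquot _ (P.plane_point i), sub_self]
  have hcoord : P.constDer.1 m = awayProd α P.point * C (P.point m) := rfl
  ext <;> simp [fibreMap, hlast, hsyz, hcoord]

/-- The Koszul derivation `koszulVec`, multiplied into `D(𝒜)`. -/
noncomputable def koszulDer (i j : Fin 3) : derivModule α :=
  ⟨awayProd α P.point • P.koszulVec i j, awayProd_smul_mem_derivModule fun H hH ↦ by
    obtain rfl | ⟨l, rfl⟩ := P.eq_of_point H hH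
    · simp [P.derMap_last_koszulVec]
    · exact Dvd.intro_left _ (P.derMap_plane_koszulVec i j l).symm⟩

theorem lastQuot_koszulDer (i j : Fin 3) : P.lastQuot (P.koszulDer i j) = 0 :=
  derQuot_eq_of_mul_linForm_eq _ (by simp [koszulDer, derMap_last_koszulVec])

theorem syzygy_koszulDer (i j l : Fin 3) :
    P.syzygy l (P.koszulDer i j) = awayProd α P.point *
      ((if l = i then C (P.coeff j) * linForm (α (P.plane j)) else 0) -
        if l = j then C (P.coeff i) * linForm (α (P.plane i)) else 0) := by
  rw [syzygy, LinearMap.sub_apply, lastQuot_koszulDer, sub_zero]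
  refine derQuot_eq_of_mul_linForm_eq _ ?_
  rw [koszulDer, map_smul, derMap_plane_koszulVec, smul_eq_mul, mul_assoc]

theorem fibreMap_koszulDer (m : Fin 4) (k : Fin 3) :
    P.fibreMap m (P.koszulDer (k + 1) (k + 2)) =
      (0, 0, Pi.single k (eval P.point (awayProd α P.point) * P.coeff (k + 2))) := by
  have hform (i : Fin 3) : eval P.point (linForm (α (P.plane i))) = 0 := by
    rw [eval_linForm, P.plane_point]
  refine Prod.ext ?_ (Prod.ext ?_ (funext fun l ↦ ?_))
  · simp [fibreMap, lastQuot_koszulDer]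
  · simp [fibreMap, koszulDer, koszulVec, hform]
  · fin_cases k <;> fin_cases l <;>
      simp [fibreMap, syzygy_koszulDer, Derivation.leibniz, dirDeriv_linForm, hform, P.plane_dual]

end AwayProd

theorem fibreMap_surjective [Finite ι] {m : Fin 4} (hm : P.point m ≠ 0) :
    Function.Surjective (P.fibreMap m) := by
  rintro ⟨x, y, z⟩
  have := Fintype.ofFinite ι
  have hq : eval P.point (awayProd α P.point) ≠ 0 := eval_awayProd_ne_zero P.point
  set q := eval P.point (awayProd α P.point) with hqdef
  refine ⟨(C x : S4) • ⟨X, euler_mem_derivModule⟩ +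
    (C ((y - x * P.point m) / (q * P.point m)) : S4) • P.constDer +
    ∑ k, (C (z k / (q * P.coeff (k + 2))) : S4) • P.koszulDer (k + 1) (k + 2), ?_⟩
  simp only [map_add, map_sum, map_smulₛₗ, eval_C, fibreMap_euler, fibreMap_constDer,
    fibreMap_koszulDer, ← hqdef]
  refine Prod.ext ?_ (Prod.ext ?_ (funext fun l ↦ ?_))
  · simp [Prod.fst_sum]
  · simp only [Prod.smul_mk, smul_eq_mul, mul_one, mul_zero, Prod.mk_add_mk, add_zero,
      Prod.snd_add, Prod.snd_sum, Prod.fst_add, Prod.fst_sum, Finset.sum_const_zero]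
    field_simp
    ring
  · simp only [Prod.smul_mk, smul_zero, Prod.mk_add_mk, add_zero, Prod.snd_add, Prod.snd_sum,
      Pi.add_apply, Pi.zero_apply, Finset.sum_apply, Pi.smul_apply, Pi.single_apply, smul_eq_mul,
      mul_ite, mul_zero, Finset.sum_ite_eq, Finset.mem_univ, ↓reduceIte, zero_add]
    field_simp [P.coeff_ne_zero]

theorem not_free_derivModule [Finite ι] (P : GenericQuadruplePoint α) :
    ¬ Module.Free S4 (derivModule α) := by
  intro _
  obtain ⟨m, hm⟩ := Function.ne_iff.1 P.point_ne_zero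
  have hlower : 5 ≤ Module.finrank S4 (derivModule α) := by
    simpa using finrank_le_finrank_of_surjective_semilinear _ (P.fibreMap_surjective hm)
  have hupper : Module.finrank S4 (derivModule α) ≤ 4 := by
    simpa using Submodule.finrank_le (derivModule α)
  omega

end GenericQuadruplePoint

/-- The planes `z`, `x - y + z`, `y - z - w` and `x + z - w`, the last form being the sum of the
other three, at the point `(1 : 1 : 0 : 1)`. -/
def quadruplePointA93 : GenericQuadruplePoint A93 where
  point := ![1, 1, 0, 1]
  plane := ![2, 5, 6]
  last := 7
  coeff := 1
  dual := ![![0, 1, 1, 0], ![1, 0, 0, 0], ![0, 0, 0, -1]]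
  point_ne_zero := by simp
  coeff_ne_zero := by simp
  plane_dual i j := by fin_cases i <;> fin_cases j <;> simp [A93]
  last_eq := by
    ext n
    fin_cases n <;> simp [A93, Fin.sum_univ_three]
  plane_point i := by fin_cases i <;> simp [A93]
  eq_of_point H := by
    fin_cases H <;> simp [A93, Fin.exists_fin_succ]

/-- The derivation module of 𝒜₉₃ is not a free `S`-module. -/
theorem not_free_A93 : ¬ Module.Free S4 ↥(derivModule A93) :=
  quadruplePointA93.not_free_derivModule
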